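/- Let C be a non-circular component of G such that either F(μ) = 0 for some loop μ in C, or there exist loops μ₁, μ₂ in C with F(μ₁) < 0 < F(μ₂). Then ρ(A(β)^C) > 1 for every β ∈ ℝ. -/

import Mathlib

open Filter Finset

/-- The spectral radius of a real matrix, `ρ(M) = lim_n ‖Mⁿ‖^{1/n}`
(computed with the entrywise ℓ¹-norm, and as a `limsup` so that it is always defined;
it is `0` for the matrix over the empty index type). -/
noncomputable def specRad {n : Type*} [Fintype n] [DecidableEq n] (M : Matrix n n ℝ) : ℝ :=
  Filter.limsup (fun k : ℕ => (∑ i, ∑ j, |(M ^ k) i j|) ^ ((1 : ℝ) / (k : ℝ))) Filter.atTop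

/-- The spectral radius `ρ(B^S)` of the submatrix of `B` obtained by restricting to `S × S`. -/
noncomputable def specRadOn {V : Type*} [Fintype V] (B : Matrix V V ℝ) (S : Set V) : ℝ :=
  letI : Fintype S := (Set.toFinite S).fintype
  letI : DecidableEq S := Classical.decEq _
  specRad (fun i j : S => B i.1 j.1)

variable {V E : Type*}

/-- Consecutive edges of the list match up: `r(eᵢ) = s(eᵢ₊₁)`. -/
def ChainOK (src rng : E → V) (μ : List E) : Prop :=
  List.Chain' (fun e f => rng e = src f) μ

/-- A loop: a nonempty path `μ = e₁⋯eₙ` with `s(e₁) = r(eₙ)`. -/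
def IsLoop (src rng : E → V) (μ : List E) : Prop :=
  ∃ h : μ ≠ [], ChainOK src rng μ ∧ src (μ.head h) = rng (μ.getLast h)

/-- A loop lying in the vertex set `C`. -/
def LoopIn (src rng : E → V) (C : Set V) (μ : List E) : Prop :=
  IsLoop src rng μ ∧ ∀ e ∈ μ, src e ∈ C ∧ rng e ∈ C

/-- `v ⤳ w`: there is a (possibly length-0) path from `v` to `w`. -/
def GReaches (src rng : E → V) (v w : V) : Prop :=
  v = w ∨ ∃ μ : List E, ∃ h : μ ≠ [],
    ChainOK src rng μ ∧ src (μ.head h) = v ∧ rng (μ.getLast h) = w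

/-- The closure of a set of vertices: all vertices that reach it. -/
def GClosure (src rng : E → V) (C : Set V) : Set V :=
  {v | ∃ w ∈ C, GReaches src rng v w}

/-- A component: an equivalence class of `v ∼ w` (mutual reachability) containing a loop. -/
def GIsComponent (src rng : E → V) (C : Set V) : Prop :=
  (∃ v, C = {w | GReaches src rng v w ∧ GReaches src rng w v}) ∧
  ∃ μ : List E, LoopIn src rng C μ

/-- The property that the loop `μ` witnesses circularity of the component `C`: `μ` is a simple
loop visiting every vertex of `C`, and containing every edge of the graph joining vertices
of `C`. -/
def CircularWitness (src rng : E → V) (C : Set V) (μ : List E) : Prop :=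
  LoopIn src rng C μ ∧ (μ.map src).Nodup ∧
  (∀ v ∈ C, v ∈ μ.map src) ∧
  (∀ e : E, src e ∈ C → rng e ∈ C → e ∈ μ)

/-- A circular component: a component containing, up to the choice of starting vertex,
exactly one loop. -/
def IsCircular (src rng : E → V) (C : Set V) : Prop :=
  GIsComponent src rng C ∧ ∃ μ : List E, CircularWitness src rng C μ

/-- The matrix `A(β)` with entries `A(β)_{vw} = Σ_{e : v → w} e^{-β F(e)}`. -/
noncomputable def Amat [Fintype E] [DecidableEq V] (src rng : E → V) (F : E → ℝ) (β : ℝ) :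
    Matrix V V ℝ :=
  fun v w => ∑ e ∈ Finset.univ.filter (fun e => src e = v ∧ rng e = w), Real.exp (-β * F e)

/-- `F` extended to paths: `F(e₁⋯eₙ) = F(e₁) + ⋯ + F(eₙ)`. -/
def Fpath (F : E → ℝ) (μ : List E) : ℝ := (μ.map F).sum


/-- Paths by recursion. -/
def Pth (src rng : E → V) : List E → V → V → Prop
  | [], v, w => v = w
  | e :: l, v, w => src e = v ∧ Pth src rng l (rng e) w

theorem Pth_append (src rng : E → V) (a b : List E) (v w : V) :
    Pth src rng (a ++ b) v w ↔ ∃ u, Pth src rng a v u ∧ Pth src rng b u w := by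
  induction a generalizing v with
  | nil => simp [Pth]
  | cons e a ih =>
    simp only [List.cons_append, Pth, ih]
    constructor
    · rintro ⟨h, u, h1, h2⟩; exact ⟨u, ⟨h, h1⟩, h2⟩
    · rintro ⟨u, ⟨h, h1⟩, h2⟩; exact ⟨h, u, h1, h2⟩

theorem Pth_iff (src rng : E → V) (l : List E) (hl : l ≠ []) (v w : V) :
    Pth src rng l v w ↔
      ChainOK src rng l ∧ src (l.head hl) = v ∧ rng (l.getLast hl) = w := by
  induction l generalizing v with
  | nil => exact absurd rfl hl
  | cons e l ih =>
    cases l with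
    | nil => simp [Pth, ChainOK, List.Chain']
    | cons f l =>
      have := ih (by simp) (rng e)
      rw [Pth, this]
      simp only [ChainOK, List.Chain', List.isChain_cons_cons, List.head_cons, List.getLast_cons_cons]
      constructor
      · rintro ⟨h1, h2, h3, h4⟩; exact ⟨⟨h3.symm, h2⟩, h1, h4⟩
      · rintro ⟨⟨h3, h2⟩, h1, h4⟩; exact ⟨h1, h2, h3.symm, h4⟩

theorem GReaches_iff (src rng : E → V) (v w : V) :
    GReaches src rng v w ↔ ∃ l, Pth src rng l v w := by
  constructor
  · rintro (h | ⟨μ, h, h1⟩)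
    · exact ⟨[], h⟩
    · exact ⟨μ, (Pth_iff src rng μ h v w).2 h1⟩
  · rintro ⟨l, hl⟩
    by_cases h : l = []
    · subst h; exact Or.inl hl
    · exact Or.inr ⟨l, h, (Pth_iff src rng l h v w).1 hl⟩

theorem IsLoop_iff (src rng : E → V) (l : List E) :
    IsLoop src rng l ↔ l ≠ [] ∧ ∃ v, Pth src rng l v v := by
  constructor
  · rintro ⟨h, h1, h2⟩
    exact ⟨h, _, (Pth_iff src rng l h _ _).2 ⟨h1, h2, rfl⟩⟩
  · rintro ⟨h, v, hv⟩
    obtain ⟨h1, h2, h3⟩ := (Pth_iff src rng l h _ _).1 hv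
    exact ⟨h, h1, h2.trans h3.symm⟩

theorem Pth_flatten (src rng : E → V) (l : List E) (v : V) (h : Pth src rng l v v) (n : ℕ) :
    Pth src rng (List.replicate n l).flatten v v := by
  induction n with
  | zero => simp [Pth]
  | succ n ih =>
    rw [List.replicate_succ, List.flatten_cons, Pth_append]
    exact ⟨v, h, ih⟩

/-- Weight of a list of edges. -/
noncomputable def wt (w : E → ℝ) (l : List E) : ℝ := (l.map w).prod

theorem wt_append (w : E → ℝ) (a b : List E) : wt w (a ++ b) = wt w a * wt w b := by
  simp [wt]

theorem wt_cons (w : E → ℝ) (a : E) (b : List E) : wt w (a :: b) = w a * wt w b := by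
  simp [wt]

theorem wt_pos (w : E → ℝ) (hw : ∀ e, 0 < w e) (a : List E) : 0 < wt w a := by
  induction a with
  | nil => simp [wt]
  | cons e a ih => rw [wt_cons]; exact mul_pos (hw e) ih

theorem wt_flatten (w : E → ℝ) (l : List E) (n : ℕ) :
    wt w (List.replicate n l).flatten = wt w l ^ n := by
  induction n with
  | zero => simp [wt]
  | succ n ih => rw [List.replicate_succ, List.flatten_cons, wt_append, ih, pow_succ']

theorem wt_exp (F : E → ℝ) (β : ℝ) (l : List E) :
    wt (fun e => Real.exp (-β * F e)) l = Real.exp (-β * Fpath F l) := by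
  induction l with
  | nil => simp [wt, Fpath]
  | cons e l ih =>
    rw [wt_cons, ih, ← Real.exp_add]; simp [Fpath]; ring

theorem exists_split_of_not_nodup (src : E → V) (l : List E) (h : ¬ (l.map src).Nodup) :
    ∃ a e b f c, l = a ++ (e :: b) ++ (f :: c) ∧ src e = src f := by
  induction l with
  | nil => simp at h
  | cons x l ih =>
    by_cases hx : src x ∈ l.map src
    · obtain ⟨f, hf, hfx⟩ := List.mem_map.1 hx
      obtain ⟨b, c, rfl⟩ := List.append_of_mem hf
      exact ⟨[], x, b, f, c, by simp, hfx.symm⟩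
    · have : ¬ (l.map src).Nodup := fun h' => h (by
        rw [List.map_cons, List.nodup_cons]; exact ⟨hx, h'⟩)
      obtain ⟨a, e, b, f, c, rfl, hef⟩ := ih this
      exact ⟨x :: a, e, b, f, c, by simp, hef⟩

/-- Existence of a simple loop of weight at least one. -/
theorem exists_simple (src rng : E → V) (w : E → ℝ) (hw : ∀ e, 0 < w e) (C : Set V) (n : ℕ) :
    ∀ l : List E, l.length = n → l ≠ [] → (∃ v, Pth src rng l v v) →
      (∀ e ∈ l, src e ∈ C ∧ rng e ∈ C) → 1 ≤ wt w l →
    ∃ l : List E, l ≠ [] ∧ (∃ v, Pth src rng l v v) ∧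
      (∀ e ∈ l, src e ∈ C ∧ rng e ∈ C) ∧ 1 ≤ wt w l ∧ (l.map src).Nodup := by
  induction n using Nat.strong_induction_on with
  | _ n ih =>
  rintro l hn h0 ⟨v, hv⟩ hC h1
  by_cases hd : (l.map src).Nodup
  · exact ⟨l, h0, ⟨v, hv⟩, hC, h1, hd⟩
  obtain ⟨a, e, b, f, c, rfl, hef⟩ := exists_split_of_not_nodup src l hd
  obtain ⟨u, h2, hfc⟩ := (Pth_append ..).1 hv
  obtain ⟨t, ha, heb⟩ := (Pth_append ..).1 h2
  have hut : t = u := by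
    have h3 := heb.1
    have h4 := hfc.1
    rw [← h3, ← h4, hef]
  subst hut
  by_cases h5 : 1 ≤ wt w (e :: b)
  · refine ih (e :: b).length ?_ (e :: b) rfl (by simp) ⟨t, heb⟩ ?_ h5
    · rw [← hn]; simp; omega
    · intro x hx; exact hC x (by simp at hx ⊢; tauto)
  · refine ih (a ++ f :: c).length ?_ (a ++ f :: c) rfl (by simp)
      ⟨v, (Pth_append ..).2 ⟨t, ha, hfc⟩⟩ ?_ ?_
    · rw [← hn]; simp
    · intro x hx; exact hC x (by simp at hx ⊢; tauto)
    · rw [wt_append, wt_append] at h1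
      rw [wt_append]
      have := mul_pos (wt_pos w hw a) (wt_pos w hw (f :: c))
      push Not at h5
      have h6 := wt_pos w hw (e :: b)
      nlinarith

/-- entrywise sum norm -/
noncomputable def sNorm {n : Type*} [Fintype n] (M : Matrix n n ℝ) : ℝ := ∑ i, ∑ j, |M i j|

theorem sNorm_nonneg {n : Type*} [Fintype n] (M : Matrix n n ℝ) : 0 ≤ sNorm M :=
  Finset.sum_nonneg fun _ _ => Finset.sum_nonneg fun _ _ => abs_nonneg _

theorem le_sNorm {n : Type*} [Fintype n] (M : Matrix n n ℝ) (i j : n) : |M i j| ≤ sNorm M :=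
  (Finset.single_le_sum (f := fun j => |M i j|) (fun _ _ => abs_nonneg _) (mem_univ j)).trans
    (Finset.single_le_sum (f := fun i => ∑ j, |M i j|)
      (fun _ _ => Finset.sum_nonneg fun _ _ => abs_nonneg _) (mem_univ i))

theorem sNorm_mul {n : Type*} [Fintype n] (M N : Matrix n n ℝ) :
    sNorm (M * N) ≤ sNorm M * sNorm N := by
  have h : ∀ i, ∑ j, |(M * N) i j| ≤ ∑ k, |M i k| * sNorm N := by
    intro i
    calc ∑ j, |(M * N) i j| ≤ ∑ j, ∑ k, |M i k| * |N k j| := by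
          refine Finset.sum_le_sum fun j _ => ?_
          rw [Matrix.mul_apply]
          refine (Finset.abs_sum_le_sum_abs _ _).trans (le_of_eq ?_)
          simp [abs_mul]
      _ = ∑ k, |M i k| * ∑ j, |N k j| := by
          rw [Finset.sum_comm]; simp [Finset.mul_sum]
      _ ≤ _ := by
          refine Finset.sum_le_sum fun k _ => mul_le_mul_of_nonneg_left ?_ (abs_nonneg _)
          exact Finset.single_le_sum (f := fun k => ∑ j, |N k j|)
            (fun _ _ => Finset.sum_nonneg fun _ _ => abs_nonneg _) (mem_univ k)
  calc sNorm (M * N) ≤ ∑ i, ∑ k, |M i k| * sNorm N := Finset.sum_le_sum fun i _ => h i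
    _ = _ := by simp only [← Finset.sum_mul]; rfl

theorem specRad_gt_one {n : Type*} [Fintype n] [DecidableEq n] (M : Matrix n n ℝ)
    (hM : ∀ i j, 0 ≤ M i j) (v : n) (N : ℕ) (hN : 0 < N) (h : 1 < (M ^ N) v v) :
    1 < specRad M := by
  have hpow : ∀ k : ℕ, ∀ i j, 0 ≤ (M ^ k) i j := by
    intro k
    induction k with
    | zero => intro i j; rw [pow_zero, Matrix.one_apply]; split_ifs <;> norm_num
    | succ k ih =>
      intro i j
      rw [pow_succ, Matrix.mul_apply]
      exact Finset.sum_nonneg fun t _ => mul_nonneg (ih _ _) (hM _ _)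
  set c := (M ^ N) v v with hc
  have hck : ∀ k : ℕ, c ^ k ≤ (M ^ (N * k)) v v := by
    intro k
    induction k with
    | zero => simp
    | succ k ih =>
      rw [pow_succ, Nat.mul_succ, pow_add, Matrix.mul_apply]
      refine (mul_le_mul_of_nonneg_right ih (by linarith)).trans ?_
      exact Finset.single_le_sum (f := fun t => (M ^ (N * k)) v t * (M ^ N) t v)
        (fun t _ => mul_nonneg (hpow _ _ _) (hpow _ _ _)) (mem_univ v)
  have hN' : (0 : ℝ) < N := by exact_mod_cast hN
  have h1 : 1 < c ^ ((1 : ℝ) / N) := Real.one_lt_rpow h (by positivity)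
  refine lt_of_lt_of_le h1 ?_
  unfold specRad
  set R := sNorm (1 : Matrix n n ℝ) + sNorm M + 1 with hR
  have hR1 : 1 ≤ R := by
    have := sNorm_nonneg (1 : Matrix n n ℝ)
    have := sNorm_nonneg M
    linarith
  have hB : ∀ k : ℕ, sNorm (M ^ k) ≤ R ^ (k + 1) := by
    intro k
    induction k with
    | zero =>
      simp only [pow_zero, zero_add, pow_one]
      have := sNorm_nonneg M
      linarith
    | succ k ih =>
      rw [pow_succ, pow_succ R]
      refine (sNorm_mul _ _).trans (mul_le_mul ih ?_ (sNorm_nonneg _) (by positivity))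
      have := sNorm_nonneg (1 : Matrix n n ℝ)
      linarith
  apply Filter.le_limsup_of_frequently_le
  · rw [Filter.frequently_atTop]
    intro a
    refine ⟨N * (a + 1), by nlinarith, ?_⟩
    have h2 : c ^ (a + 1) ≤ sNorm (M ^ (N * (a + 1))) :=
      (hck (a + 1)).trans ((le_abs_self _).trans (le_sNorm _ v v))
    have h3 : c ^ ((1 : ℝ) / N) = (c ^ (a + 1)) ^ ((1 : ℝ) / ((N * (a + 1) : ℕ) : ℝ)) := by
      rw [← Real.rpow_natCast c (a + 1), ← Real.rpow_mul (by linarith)]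
      congr 1
      push_cast
      have : (a : ℝ) + 1 ≠ 0 := by positivity
      field_simp
    rw [h3]
    exact Real.rpow_le_rpow (by positivity) h2 (by positivity)
  · refine Filter.isBoundedUnder_of_eventually_le (a := R ^ 2) ?_
    filter_upwards [Filter.eventually_ge_atTop 1] with k hk
    have hk' : (0 : ℝ) < k := by exact_mod_cast hk
    have h2 : sNorm (M ^ k) ≤ (R ^ 2) ^ k := by
      refine (hB k).trans ?_
      rw [← pow_mul]
      exact pow_le_pow_right₀ hR1 (by omega)
    refine (Real.rpow_le_rpow (sNorm_nonneg _) h2 (by positivity)).trans (le_of_eq ?_)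
    rw [one_div]
    exact Real.pow_rpow_inv_natCast (by positivity) (by omega)

section two
variable [Fintype E] [DecidableEq V]

theorem step_sum (src rng : E → V) (w : E → ℝ) (C : Set V) [Fintype C]
    (v : C) (x : C → ℝ) (X : V → ℝ) (hX : ∀ u : C, X u = x u) (hX0 : ∀ u, u ∉ C → X u = 0) :
    ∑ u : C, (∑ e ∈ Finset.univ.filter (fun e => src e = v.1 ∧ rng e = u.1), w e) * x u
      = ∑ e ∈ Finset.univ.filter (fun e => src e = v.1), w e * X (rng e) := by
  simp only [Finset.sum_filter, Finset.sum_mul]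
  rw [Finset.sum_comm]
  refine Finset.sum_congr rfl fun e _ => ?_
  by_cases h : src e = v.1
  · simp only [h, true_and, if_true, ite_mul, zero_mul]
    by_cases hC : rng e ∈ C
    · rw [Finset.sum_eq_single (⟨rng e, hC⟩ : C)]
      · simp [← hX]
      · intro b _ hb
        rw [if_neg]
        intro h'; exact hb (Subtype.ext h'.symm)
      · simp
    · rw [hX0 _ hC, mul_zero]
      refine Finset.sum_eq_zero fun u _ => if_neg ?_
      intro h'; exact hC (h' ▸ u.2)
  · simp [h]

variable (src rng : E → V) (w : E → ℝ) (C : Set V) [Fintype C] [DecidableEq C]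

/-- the matrix on `C` -/
noncomputable def cMat : Matrix C C ℝ :=
  fun v u => ∑ e ∈ Finset.univ.filter (fun e => src e = v.1 ∧ rng e = u.1), w e

open Classical in
/-- Extension of a column by zero. -/
noncomputable def cX (k : ℕ) (t : C) (u : V) : ℝ :=
  if h : u ∈ C then (cMat src rng w C ^ k) ⟨u, h⟩ t else 0

theorem cMat_pow_succ (k : ℕ) (v t : C) : (cMat src rng w C ^ (k + 1)) v t =
    ∑ e ∈ Finset.univ.filter (fun e => src e = v.1), w e * cX src rng w C k t (rng e) := by
  rw [pow_succ', Matrix.mul_apply]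
  exact step_sum src rng w C v (fun u => (cMat src rng w C ^ k) u t) _
    (fun u => by simp [cX]) (fun u hu => by simp [cX, hu])

theorem cMat_nonneg (hw : ∀ e, 0 < w e) (u t : C) : 0 ≤ cMat src rng w C u t :=
  Finset.sum_nonneg fun e _ => (hw e).le

theorem cX_nonneg (hw : ∀ e, 0 < w e) (k : ℕ) (t : C) (u : V) : 0 ≤ cX src rng w C k t u := by
  have hpow : ∀ k : ℕ, ∀ i j, 0 ≤ (cMat src rng w C ^ k) i j := by
    intro k
    induction k with
    | zero => intro i j; rw [pow_zero, Matrix.one_apply]; split_ifs <;> norm_num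
    | succ k ih =>
      intro i j
      rw [pow_succ, Matrix.mul_apply]
      exact Finset.sum_nonneg fun t _ => mul_nonneg (ih _ _) (cMat_nonneg src rng w C hw _ _)
  unfold cX
  split_ifs
  · exact hpow _ _ _
  · exact le_rfl

theorem cX_eq (k : ℕ) (t v : C) : cX src rng w C k t v = (cMat src rng w C ^ k) v t := by
  simp [cX]

theorem one_path (hw : ∀ e, 0 < w e) (t : C) (p : List E) : ∀ v : V, v ∈ C →
    Pth src rng p v t → (∀ e ∈ p, src e ∈ C ∧ rng e ∈ C) →
    wt w p ≤ cX src rng w C p.length t v := by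
  induction p with
  | nil =>
    intro v hv h _
    have : v = t.1 := h
    subst this
    rw [cX_eq]; simp [wt]
  | cons e p ih =>
    intro v hv h hC
    rw [List.length_cons, cX_eq src rng w C _ t ⟨v, hv⟩, cMat_pow_succ, wt_cons]
    have h1 := ih (rng e) (hC e (by simp)).2 h.2 (fun x hx => hC x (by simp [hx]))
    refine (mul_le_mul_of_nonneg_left h1 (hw e).le).trans ?_
    exact Finset.single_le_sum (f := fun e => w e * cX src rng w C p.length t (rng e))
      (fun x _ => mul_nonneg (hw x).le (cX_nonneg src rng w C hw _ _ _))
      (by simp [h.1])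

theorem two_path (hw : ∀ e, 0 < w e) (t : C) (p : List E) : ∀ (q : List E) (v : V), v ∈ C →
    p.length = q.length → p ≠ q →
    Pth src rng p v t → (∀ e ∈ p, src e ∈ C ∧ rng e ∈ C) →
    Pth src rng q v t → (∀ e ∈ q, src e ∈ C ∧ rng e ∈ C) →
    wt w p + wt w q ≤ cX src rng w C p.length t v := by
  classical
  induction p with
  | nil =>
    intro q v _ hl hne
    exact absurd (List.length_eq_zero_iff.1 hl.symm).symm hne
  | cons e p ih =>
    intro q v hv hl hne hp hpC hq hqC
    cases q with
    | nil => simp at hl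
    | cons f q =>
    have hl' : p.length = q.length := by simpa using hl
    rw [List.length_cons, cX_eq src rng w C _ t ⟨v, hv⟩, cMat_pow_succ, wt_cons, wt_cons]
    have hnn : ∀ x, 0 ≤ w x * cX src rng w C p.length t (rng x) :=
      fun x => mul_nonneg (hw x).le (cX_nonneg src rng w C hw _ _ _)
    by_cases hef : e = f
    · subst hef
      have h1 := ih q (rng e) (hpC e (by simp)).2 hl' (fun h => hne (by rw [h]))
        hp.2 (fun x hx => hpC x (by simp [hx])) hq.2 (fun x hx => hqC x (by simp [hx]))
      rw [← mul_add]
      refine (mul_le_mul_of_nonneg_left h1 (hw e).le).trans ?_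
      exact Finset.single_le_sum (f := fun e => w e * cX src rng w C p.length t (rng e))
        (fun x _ => hnn x) (by simp [hp.1])
    · have h1 := one_path src rng w C hw t p (rng e) (hpC e (by simp)).2 hp.2
        (fun x hx => hpC x (by simp [hx]))
      have h2 := one_path src rng w C hw t q (rng f) (hqC f (by simp)).2 hq.2
        (fun x hx => hqC x (by simp [hx]))
      rw [← hl'] at h2
      have h3 : ∑ x ∈ ({e, f} : Finset E), w x * cX src rng w C p.length t (rng x) ≤
          ∑ x ∈ Finset.univ.filter (fun x => src x = v),
            w x * cX src rng w C p.length t (rng x) := by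
        refine Finset.sum_le_sum_of_subset_of_nonneg ?_ (fun x _ _ => hnn x)
        intro x hx
        simp only [Finset.mem_insert, Finset.mem_singleton] at hx
        rcases hx with rfl | rfl
        · simp [hp.1]
        · simp [hq.1]
      rw [Finset.sum_pair hef] at h3
      have h4 := mul_le_mul_of_nonneg_left h1 (hw e).le
      have h5 := mul_le_mul_of_nonneg_left h2 (hw f).le
      exact (add_le_add h4 h5).trans h3

theorem cMat_gt_one (hw : ∀ e, 0 < w e) (v : C) (μ ν : List E)
    (hμ0 : μ ≠ []) (hμ : Pth src rng μ v v) (hμC : ∀ e ∈ μ, src e ∈ C ∧ rng e ∈ C)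
    (hν : Pth src rng ν v v) (hνC : ∀ e ∈ ν, src e ∈ C ∧ rng e ∈ C)
    (h1 : 1 ≤ wt w μ) (e : E) (he : e ∈ ν) (he' : e ∉ μ) :
    1 < specRad (cMat src rng w C) := by
  have hν0 : ν ≠ [] := List.ne_nil_of_mem he
  have hμl : 0 < μ.length := List.length_pos_iff.2 hμ0
  have hνl : 0 < ν.length := List.length_pos_iff.2 hν0
  have hmem : ∀ (l : List E) (n : ℕ) (x : E), x ∈ (List.replicate n l).flatten → x ∈ l := by
    intro l n x hx
    obtain ⟨y, hy, hxy⟩ := List.mem_flatten.1 hx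
    rw [List.eq_of_mem_replicate hy] at hxy
    exact hxy
  have h := two_path src rng w C hw v (List.replicate ν.length μ).flatten
    (List.replicate μ.length ν).flatten v v.2 (by simp [mul_comm]) ?_
    (Pth_flatten src rng μ v hμ _) (fun x hx => hμC x (hmem _ _ _ hx))
    (Pth_flatten src rng ν v hν _) (fun x hx => hνC x (hmem _ _ _ hx))
  · rw [cX_eq, wt_flatten, wt_flatten] at h
    refine specRad_gt_one _ (cMat_nonneg src rng w C hw) v _ ?_ (lt_of_lt_of_le ?_ h)
    · simp only [List.length_flatten, List.map_replicate, List.sum_replicate, smul_eq_mul]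
      positivity
    · have h2 := one_le_pow₀ h1 (n := ν.length)
      have h3 := pow_pos (wt_pos w hw ν) μ.length
      linarith
  · intro heq
    apply he'
    apply hmem μ ν.length
    rw [heq]
    exact List.mem_flatten.2 ⟨ν, List.mem_replicate.2 ⟨by omega, rfl⟩, he⟩

end two

theorem comp_reach (src rng : E → V) (C : Set V) (hC : GIsComponent src rng C) (v w : V)
    (hv : v ∈ C) (hw : w ∈ C) :
    ∃ l, Pth src rng l v w := by
  obtain ⟨⟨v0, rfl⟩, -⟩ := hC
  obtain ⟨a, ha⟩ := (GReaches_iff ..).1 hv.2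
  obtain ⟨b, hb⟩ := (GReaches_iff ..).1 hw.1
  exact ⟨a ++ b, (Pth_append ..).2 ⟨_, ha, hb⟩⟩

theorem comp_path (src rng : E → V) (C : Set V) (hC : GIsComponent src rng C) (v w : V)
    (hv : v ∈ C) (hw : w ∈ C) (l : List E) (hl : Pth src rng l v w) :
    ∀ e ∈ l, src e ∈ C ∧ rng e ∈ C := by
  obtain ⟨⟨v0, rfl⟩, -⟩ := hC
  intro e he
  obtain ⟨c, d, rfl⟩ := List.append_of_mem he
  obtain ⟨a, ha⟩ := (GReaches_iff ..).1 hv.1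
  obtain ⟨b, hb⟩ := (GReaches_iff ..).1 hw.2
  obtain ⟨u, hc, rfl, hd⟩ := (Pth_append ..).1 hl
  have hdb := (Pth_append ..).2 ⟨_, hd, hb⟩
  have hac := (Pth_append ..).2 ⟨_, ha, hc⟩
  refine ⟨⟨?_, ?_⟩, ?_, ?_⟩ <;> rw [GReaches_iff]
  · exact ⟨_, hac⟩
  · exact ⟨e :: (d ++ b), rfl, hdb⟩
  · exact ⟨(a ++ c) ++ [e], (Pth_append ..).2 ⟨_, hac, rfl, rfl⟩⟩
  · exact ⟨_, hdb⟩

/-- For a non-circular component `C` having either a loop with `F(μ) = 0` or loops of both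
signs, `ρ(A(β)^C) > 1` for every `β`. -/
theorem specRad_component_gt_one {V E : Type*} [Fintype V] [DecidableEq V] [Fintype E]
    (src rng : E → V) (F : E → ℝ)
    (C : Set V) (hC : GIsComponent src rng C) (hnc : ¬ IsCircular src rng C)
    (hF : (∃ μ : List E, LoopIn src rng C μ ∧ Fpath F μ = 0) ∨
      (∃ μ₁ μ₂ : List E, LoopIn src rng C μ₁ ∧ LoopIn src rng C μ₂ ∧
        Fpath F μ₁ < 0 ∧ 0 < Fpath F μ₂)) :
    ∀ β : ℝ, 1 < specRadOn (Amat src rng F β) C := by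
  intro β
  set w : E → ℝ := fun e => Real.exp (-β * F e) with hwdef
  have hw : ∀ e, 0 < w e := fun e => Real.exp_pos _
  have hex : ∃ μ, LoopIn src rng C μ ∧ 1 ≤ wt w μ := by
    rcases hF with ⟨μ, h1, h2⟩ | ⟨μ₁, μ₂, h1, h2, h3, h4⟩
    · exact ⟨μ, h1, by rw [wt_exp, h2]; simp⟩
    · rcases le_total 0 β with hβ | hβ
      · exact ⟨μ₁, h1, by rw [wt_exp]; exact Real.one_le_exp (by nlinarith)⟩
      · exact ⟨μ₂, h2, by rw [wt_exp]; exact Real.one_le_exp (by nlinarith)⟩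
  obtain ⟨μ', ⟨hl, hlC⟩, hw1⟩ := hex
  obtain ⟨h0, hv⟩ := (IsLoop_iff ..).1 hl
  obtain ⟨μ, hμ0, ⟨v, hμ⟩, hμC, hμ1, hnd⟩ :=
    exists_simple src rng w hw C _ μ' rfl h0 hv hlC hw1
  have hvs : v ∈ μ.map src := by
    cases μ with
    | nil => exact absurd rfl hμ0
    | cons x l => have := hμ.1; simp [this]
  have hvC : v ∈ C := by
    obtain ⟨x, hx, rfl⟩ := List.mem_map.1 hvs
    exact (hμC x hx).1
  have hedge : ∃ e, src e ∈ C ∧ rng e ∈ C ∧ e ∉ μ := by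
    by_contra hcon
    push Not at hcon
    apply hnc
    refine ⟨hC, μ, ⟨(IsLoop_iff ..).2 ⟨hμ0, v, hμ⟩, hμC⟩, hnd, ?_, hcon⟩
    intro u hu
    obtain ⟨l, hl⟩ := comp_reach src rng C hC u v hu hvC
    have hlC := comp_path src rng C hC u v hu hvC l hl
    cases l with
    | nil => have : u = v := hl
             rw [this]; exact hvs
    | cons x l =>
      have h1 : src x = u := hl.1
      have h2 := hlC x (by simp)
      rw [← h1]
      exact List.mem_map_of_mem (hcon x h2.1 h2.2)
  obtain ⟨e, he1, he2, he⟩ := hedge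
  obtain ⟨a, ha⟩ := comp_reach src rng C hC v (src e) hvC he1
  obtain ⟨b, hb⟩ := comp_reach src rng C hC (rng e) v he2 hvC
  have hν : Pth src rng (a ++ e :: b) v v := (Pth_append ..).2 ⟨_, ha, rfl, hb⟩
  unfold specRadOn
  letI : Fintype C := (Set.toFinite C).fintype
  letI : DecidableEq C := Classical.decEq _
  exact cMat_gt_one src rng w C hw ⟨v, hvC⟩ μ (a ++ e :: b) hμ0 hμ hμC hν
    (comp_path src rng C hC v v hvC hvC _ hν) hμ1 e (by simp) he
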